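/- Let F be a Ferrers diagram of semiperimeter n+1, T ∈ EWtab(F), and S = S(T) its supplementary tableau. If T_{jk} is a cornersupport entry of T, then there exist j' ∈ rows(F) and k' ∈ cols(F) with j' ≠ j and k' ≠ k such that S_{j'k'} induces T_{jk} to be a cornersupport (i.e., S_{j'k'} = 1 − T_{jk} and S_{j'k} = S_{jk'} = T_{jk}), and moreover either T_{jk} = T_{jk'} = 0 and T_{j'k'} = 1 with (j,k'), (j',k') both cells of F, or T_{jk} = T_{j'k} = 1 and T_{j'k'} = 0 with (j',k), (j',k') both cells of F. -/

import Mathlib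

open Classical

/-- A Ferrers diagram of semiperimeter `n + 1`, encoded by the set of its row labels
(labels `0, …, n` run along the south-east border; `0` labels the top row and the
last label `n` is a column label). -/
structure Ferrers (n : ℕ) where
  rows : Finset (Fin (n + 1))
  zero_mem : 0 ∈ rows
  last_not_mem : Fin.last n ∉ rows

namespace Ferrers

/-- `(i, j)` is a cell of the diagram: `i` is a row label, `j` a column label, `i < j`. -/
def Cell {n : ℕ} (F : Ferrers n) (i j : Fin (n + 1)) : Prop :=
  i ∈ F.rows ∧ j ∉ F.rows ∧ i < j

/-- Adjacency in the Ferrers graph `G(F)`. -/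
def Adj {n : ℕ} (F : Ferrers n) (u v : Fin (n + 1)) : Prop :=
  F.Cell u v ∨ F.Cell v u

/-- Degree of a vertex in `G(F)`. -/
noncomputable def deg {n : ℕ} (F : Ferrers n) (v : Fin (n + 1)) : ℕ :=
  {u | F.Adj v u}.ncard

/-- Toppling a single vertex.  The height at the sink `0` is kept equal to `c 0`
(grains sent to the sink vanish); toppling the sink sends one grain to each of
its neighbours. -/
noncomputable def topple {n : ℕ} (F : Ferrers n) (c : Fin (n + 1) → ℕ)
    (v : Fin (n + 1)) : Fin (n + 1) → ℕ :=
  fun u =>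
    if u = 0 then c 0
    else if u = v then c v - F.deg v
    else if F.Adj v u then c u + 1
    else c u

/-- Toppling the vertices of a list in order. -/
noncomputable def toppleList {n : ℕ} (F : Ferrers n) (c : Fin (n + 1) → ℕ)
    (l : List (Fin (n + 1))) : Fin (n + 1) → ℕ :=
  l.foldl F.topple c

/-- Simultaneous toppling of a set of vertices. -/
noncomputable def toppleSet {n : ℕ} (F : Ferrers n) (c : Fin (n + 1) → ℕ)
    (S : Set (Fin (n + 1))) : Fin (n + 1) → ℕ :=
  fun u =>
    if u = 0 then c 0
    else c u + {w ∈ S | F.Adj w u}.ncard - if u ∈ S then F.deg u else 0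

/-- A configuration is stable if every non-sink vertex has fewer grains than its degree. -/
def Stable {n : ℕ} (F : Ferrers n) (c : Fin (n + 1) → ℕ) : Prop :=
  ∀ v, v ≠ 0 → c v < F.deg v

/-- A Dhar (burning) ordering for `c`: an ordering `v₀ = 0, v₁, …, vₙ` of all the
vertices such that each `vᵢ` (`i ≥ 1`) is unstable after toppling `v₀, …, v_{i-1}`. -/
def DharSeq {n : ℕ} (F : Ferrers n) (c : Fin (n + 1) → ℕ) (l : List (Fin (n + 1))) : Prop :=
  l.length = n + 1 ∧ l.Nodup ∧ l.head? = some 0 ∧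
    ∀ i, ∀ h : i < l.length, 1 ≤ i →
      F.deg (l.get ⟨i, h⟩) ≤ F.toppleList c (l.take i) (l.get ⟨i, h⟩)

/-- Recurrent configurations (via Dhar's criterion).  The height at the sink is
normalised to `0`. -/
def Recurrent {n : ℕ} (F : Ferrers n) (c : Fin (n + 1) → ℕ) : Prop :=
  c 0 = 0 ∧ F.Stable c ∧ ∃ l, F.DharSeq c l

/-- Minimal recurrent configurations: recurrent with minimal total number of grains. -/
def RecMin {n : ℕ} (F : Ferrers n) (c : Fin (n + 1) → ℕ) : Prop :=
  F.Recurrent c ∧ ∀ c', F.Recurrent c' → (∑ v, c v) ≤ ∑ v, c' v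

/-- Canonical toppling: block `0` is `{0}` (the sink); from then on, blocks with odd
index are the sets of currently unstable column vertices and blocks with even index
the sets of currently unstable row vertices.  The first component is the configuration
just before toppling the block recorded in the second component. -/
noncomputable def canonAux {n : ℕ} (F : Ferrers n) (c : Fin (n + 1) → ℕ) :
    ℕ → ((Fin (n + 1) → ℕ) × Set (Fin (n + 1)))
  | 0 => (c, {0})
  | k + 1 =>
    let c' := F.toppleSet (canonAux F c k).1 (canonAux F c k).2
    (c', {v | v ≠ 0 ∧ (if k % 2 = 0 then v ∉ F.rows else v ∈ F.rows) ∧ F.deg v ≤ c' v})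

/-- The `k`-th block of the canonical toppling of `c`:
`canonTop F c 0 = U⁰ = {0}`, `canonTop F c (2i-1) = Vⁱ`, `canonTop F c (2i) = Uⁱ`. -/
noncomputable def canonTop {n : ℕ} (F : Ferrers n) (c : Fin (n + 1) → ℕ) (k : ℕ) :
    Set (Fin (n + 1)) :=
  (F.canonAux c k).2

/-- The configuration just before toppling the `k`-th block of the canonical toppling. -/
noncomputable def canonConfig {n : ℕ} (F : Ferrers n) (c : Fin (n + 1) → ℕ) (k : ℕ) :
    Fin (n + 1) → ℕ :=
  (F.canonAux c k).1

/-- The index of the block of the canonical toppling of `c` containing `v`. -/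
noncomputable def bIdx {n : ℕ} (F : Ferrers n) (c : Fin (n + 1) → ℕ) (v : Fin (n + 1)) : ℕ :=
  sInf {k | v ∈ F.canonTop c k}

/-- `T` is a EW-tableau on `F` (entries of non-cells are normalised to `false`):
the top row contains only `1`s, every other row contains a `0`, and there is no
rectangle with two diagonally opposite `0`s and two `1`s in the other corners. -/
def IsEW {n : ℕ} (F : Ferrers n) (T : Fin (n + 1) → Fin (n + 1) → Bool) : Prop :=
  (∀ i j, ¬F.Cell i j → T i j = false) ∧
  (∀ j, F.Cell 0 j → T 0 j = true) ∧
  (∀ i, i ∈ F.rows → i ≠ 0 → ∃ j, F.Cell i j ∧ T i j = false) ∧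
  (∀ i i' j j', F.Cell i j → F.Cell i j' → F.Cell i' j → F.Cell i' j' →
    T i j = T i' j' → T i j' = T i' j → T i j = T i j')

/-- The configuration associated to a tableau: row vertices count the `1`s in their
row, column vertices count the `0`s in their column (the sink is normalised to `0`). -/
noncomputable def phiTC {n : ℕ} (F : Ferrers n) (T : Fin (n + 1) → Fin (n + 1) → Bool) :
    Fin (n + 1) → ℕ :=
  fun v =>
    if v = 0 then 0
    else if v ∈ F.rows then {j | F.Cell v j ∧ T v j = true}.ncard
    else {i | F.Cell i v ∧ T i v = false}.ncard

/-- The tableau associated to a (minimal recurrent) configuration: a cell `(i, j)`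
gets a `1` exactly when `i` lies in an earlier block than `j` in the canonical
toppling of `c`. -/
noncomputable def phiCT {n : ℕ} (F : Ferrers n) (c : Fin (n + 1) → ℕ) :
    Fin (n + 1) → Fin (n + 1) → Bool :=
  fun i j => if F.Cell i j ∧ F.bIdx c i < F.bIdx c j then true else false

/-- The supplementary tableau of `T`: `S i j = 1` exactly when the row vertex `i`
lies in an earlier block than the column vertex `j` in `CanonTop (φ_TC T)`. -/
noncomputable def suppS {n : ℕ} (F : Ferrers n) (T : Fin (n + 1) → Fin (n + 1) → Bool)
    (i j : Fin (n + 1)) : Bool :=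
  if F.bIdx (F.phiTC T) i < F.bIdx (F.phiTC T) j then true else false

/-- The entry of `T` in cell `(j, k)` is a cornersupport entry. -/
def Cornersupport {n : ℕ} (F : Ferrers n) (T : Fin (n + 1) → Fin (n + 1) → Bool)
    (j k : Fin (n + 1)) : Prop :=
  ∃ j' k', j' ∈ F.rows ∧ k' ∉ F.rows ∧ j' ≠ j ∧ k' ≠ k ∧
    F.suppS T j' k' = !(T j k) ∧ F.suppS T j' k = T j k ∧ F.suppS T j k' = T j k

/-- `ν_v(T)`: the number of non-cornersupport `0`s in row `v` (if `v` is a row label),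
resp. non-cornersupport `1`s in column `v` (if `v` is a column label). -/
noncomputable def nu {n : ℕ} (F : Ferrers n) (T : Fin (n + 1) → Fin (n + 1) → Bool)
    (v : Fin (n + 1)) : ℕ :=
  if v ∈ F.rows then {k | F.Cell v k ∧ T v k = false ∧ ¬F.Cornersupport T v k}.ncard
  else {i | F.Cell i v ∧ T i v = true ∧ ¬F.Cornersupport T i v}.ncard

/-- `μ_v(c)`: if `v ∈ Uⁱ`, the number of `k ∈ Vⁱ` with `k > v`; if `v ∈ Vⁱ`,
the number of `k ∈ U^{i-1}` with `k < v`.  In both cases the relevant block is the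
one immediately preceding the block of `v`. -/
noncomputable def mu {n : ℕ} (F : Ferrers n) (c : Fin (n + 1) → ℕ) (v : Fin (n + 1)) : ℕ :=
  if v ∈ F.rows then {k | v < k ∧ k ∈ F.canonTop c (F.bIdx c v - 1)}.ncard
  else {k | k < v ∧ k ∈ F.canonTop c (F.bIdx c v - 1)}.ncard

/-- The minimal recurrent configuration with the same canonical toppling as `c`:
if `j ∈ Uⁱ` then `minrec c j = |{ℓ ∈ Vᵏ : j < ℓ, k > i}|`, and if `j ∈ Vⁱ` then
`minrec c j = |{ℓ ∈ Uᵏ : ℓ < j, k ≥ i}|` (blocks `Vᵏ` sit at odd index `2k - 1`,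
blocks `Uᵏ` at even index `2k`). -/
noncomputable def minrecFun {n : ℕ} (F : Ferrers n) (c : Fin (n + 1) → ℕ) :
    Fin (n + 1) → ℕ :=
  fun j =>
    if j = 0 then 0
    else if j ∈ F.rows then
      {l | j < l ∧ ∃ k, F.bIdx c j < 2 * k + 1 ∧ l ∈ F.canonTop c (2 * k + 1)}.ncard
    else
      {l | l < j ∧ ∃ k, F.bIdx c j < 2 * k ∧ l ∈ F.canonTop c (2 * k)}.ncard

/-- The number of edges of `G(F)` (equivalently, the number of cells of `F`). -/
noncomputable def edgeCount {n : ℕ} (F : Ferrers n) : ℕ :=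
  {p : Fin (n + 1) × Fin (n + 1) | F.Cell p.1 p.2}.ncard

end Ferrers

namespace Ferrers

variable {n : ℕ} {F : Ferrers n} {T : Fin (n + 1) → Fin (n + 1) → Bool}

/-- The orientation of `G(F)` encoded by `T`: an edge goes from row to column where `T` has
a `1`, and from column to row where `T` has a `0`. -/
def Arc (F : Ferrers n) (T : Fin (n + 1) → Fin (n + 1) → Bool) (u v : Fin (n + 1)) : Prop :=
  (F.Cell u v ∧ T u v = true) ∨ (F.Cell v u ∧ T v u = false)

/-- The vertices toppled strictly before step `k` of the canonical toppling of `c`. -/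
def toppledBefore (F : Ferrers n) (c : Fin (n + 1) → ℕ) (k : ℕ) : Set (Fin (n + 1)) :=
  {v | ∃ m < k, v ∈ F.canonTop c m}

lemma Cell.asymm {u v : Fin (n + 1)} (h : F.Cell u v) : ¬F.Cell v u :=
  fun h' => h.2.1 h'.1

lemma adj_iff_arc {u v : Fin (n + 1)} : F.Adj u v ↔ F.Arc T u v ∨ F.Arc T v u := by
  unfold Adj Arc
  cases T u v <;> cases T v u <;> simp <;> tauto

lemma Arc.asymm {u v : Fin (n + 1)} (h : F.Arc T u v) : ¬F.Arc T v u := by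
  rintro (⟨h₁, h₂⟩ | ⟨h₁, h₂⟩) <;> rcases h with ⟨h₃, h₄⟩ | ⟨h₃, h₄⟩
  · exact h₁.asymm h₃
  · simp_all
  · simp_all
  · exact h₁.asymm h₃

lemma Arc.mem_rows_iff {u v : Fin (n + 1)} (h : F.Arc T u v) : u ∈ F.rows ↔ v ∉ F.rows := by
  rcases h with ⟨⟨h₁, h₂, -⟩, -⟩ | ⟨⟨h₁, h₂, -⟩, -⟩ <;> tauto

lemma deg_eq_arc (v : Fin (n + 1)) :
    F.deg v = {u | F.Arc T u v}.ncard + {u | F.Arc T v u}.ncard := by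
  have hd : Disjoint {u | F.Arc T u v} {u | F.Arc T v u} :=
    Set.disjoint_left.2 fun _ h => Arc.asymm h
  rw [deg, ← Set.ncard_union_eq hd]
  congr 1
  ext u
  simp only [Set.mem_ofPred_eq, Set.mem_union, adj_iff_arc (T := T)]
  exact or_comm

lemma phiTC_eq_outdegree {v : Fin (n + 1)} (hv : v ≠ 0) :
    F.phiTC T v = {u | F.Arc T v u}.ncard := by
  rw [phiTC, if_neg hv]
  split_ifs with h <;> congr 1 <;> ext u <;> simp only [Set.mem_ofPred_eq, Arc, Cell] <;> tauto

lemma IsEW.not_arc_zero (hT : F.IsEW T) (u : Fin (n + 1)) : ¬F.Arc T u 0 := by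
  rintro (⟨h, -⟩ | ⟨h, h'⟩)
  · exact absurd h.2.2 (by simp)
  · simp [hT.2.1 u h] at h'

lemma IsEW.exists_arc (hT : F.IsEW T) {v : Fin (n + 1)} (hv : v ≠ 0) : ∃ u, F.Arc T u v := by
  by_cases h : v ∈ F.rows
  · obtain ⟨j, hj⟩ := hT.2.2.1 v h hv
    exact ⟨j, .inr hj⟩
  · have hc : F.Cell 0 v := ⟨F.zero_mem, h, Fin.pos_of_ne_zero hv⟩
    exact ⟨0, .inl ⟨hc, hT.2.1 v hc⟩⟩

/-- The orientation of a rectangle-free filling is acyclic: no nonempty set of vertices has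
every member entered by an arc from within the set. -/
lemma IsEW.cols_eq_empty (hT : F.IsEW T) (C : Finset (Fin (n + 1))) :
    ∀ R : Finset (Fin (n + 1)),
      (∀ i ∈ R, ∃ j ∈ C, F.Cell i j ∧ T i j = false) →
      (∀ j ∈ C, ∃ i ∈ R, F.Cell i j ∧ T i j = true) → C = ∅ := by
  induction C using Finset.strongInduction with
  | H C ih =>
    intro R hR hC
    by_contra hne
    have hne := Finset.nonempty_iff_ne_empty.2 hne
    set k := C.max' hne
    have hkC : k ∈ C := C.max'_mem hne
    obtain ⟨i₀, hi₀R, hi₀, hTi₀⟩ := hC k hkC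
    have hcell : ∀ i ∈ R, F.Cell i k := fun i hi => by
      obtain ⟨j, hj, hij, -⟩ := hR i hi
      exact ⟨hij.1, hi₀.2.1, hij.2.2.trans_le (C.le_max' j hj)⟩
    let R' := R.filter fun i => T i k = true
    let C' := C.filter fun j => ∃ i ∈ R', F.Cell i j ∧ T i j = false
    have hss : C' ⊂ C := by
      refine Finset.filter_ssubset.2 ⟨k, hkC, ?_⟩
      rintro ⟨i, hi, -, hf⟩
      simp [(Finset.mem_filter.1 hi).2] at hf
    have hR' : ∀ i ∈ R', ∃ j ∈ C', F.Cell i j ∧ T i j = false := fun i hi => by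
      obtain ⟨j, hj, h⟩ := hR i (Finset.mem_filter.1 hi).1
      exact ⟨j, Finset.mem_filter.2 ⟨hj, i, hi, h⟩, h⟩
    have hC' : ∀ j ∈ C', ∃ i ∈ R', F.Cell i j ∧ T i j = true := fun j hj => by
      obtain ⟨hjC, i, hi, hij, hf⟩ := Finset.mem_filter.1 hj
      obtain ⟨hiR, hit⟩ := Finset.mem_filter.1 hi
      obtain ⟨i', hi', hij', ht⟩ := hC j hjC
      refine ⟨i', Finset.mem_filter.2 ⟨hi', ?_⟩, hij', ht⟩
      by_contra hcon
      have := hT.2.2.2 i i' j k hij (hcell i hiR) hij' (hcell i' hi')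
      simp_all
    have h0 := ih C' hss R' hR' hC'
    obtain ⟨j, hj, -⟩ := hR' i₀ (Finset.mem_filter.2 ⟨hi₀R, hTi₀⟩)
    simp [h0] at hj

lemma toppledBefore_zero (c : Fin (n + 1) → ℕ) : F.toppledBefore c 0 = ∅ := by
  simp [toppledBefore]

lemma toppledBefore_succ (c : Fin (n + 1) → ℕ) (k : ℕ) :
    F.toppledBefore c (k + 1) = F.toppledBefore c k ∪ F.canonTop c k := by
  ext v
  simp only [toppledBefore, Set.mem_union, Set.mem_ofPred_eq, Nat.lt_succ_iff_lt_or_eq]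
  constructor
  · rintro ⟨m, h | rfl, hv⟩
    exacts [.inl ⟨m, h, hv⟩, .inr hv]
  · rintro (⟨m, h, hv⟩ | hv)
    exacts [⟨m, .inl h, hv⟩, ⟨k, .inr rfl, hv⟩]

lemma canonConfig_succ (c : Fin (n + 1) → ℕ) (k : ℕ) :
    F.canonConfig c (k + 1) = F.toppleSet (F.canonConfig c k) (F.canonTop c k) := rfl

lemma mem_canonTop_zero {c : Fin (n + 1) → ℕ} {v : Fin (n + 1)} :
    v ∈ F.canonTop c 0 ↔ v = 0 := Iff.rfl

lemma mem_canonTop_succ {c : Fin (n + 1) → ℕ} {k : ℕ} {v : Fin (n + 1)} :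
    v ∈ F.canonTop c (k + 1) ↔
      v ≠ 0 ∧ (v ∈ F.rows ↔ Even (k + 1)) ∧ F.deg v ≤ F.canonConfig c (k + 1) v := by
  change (v ≠ 0 ∧ (if k % 2 = 0 then v ∉ F.rows else v ∈ F.rows) ∧ _) ↔ _
  have : (if k % 2 = 0 then v ∉ F.rows else v ∈ F.rows) ↔ (v ∈ F.rows ↔ Even (k + 1)) := by
    rw [Nat.even_add_one, Nat.even_iff]
    split_ifs with h <;> simp [h]
  rw [this]
  rfl

lemma mem_rows_iff_even {c : Fin (n + 1) → ℕ} {k : ℕ} {v : Fin (n + 1)}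
    (h : v ∈ F.canonTop c k) : v ∈ F.rows ↔ Even k := by
  cases k with
  | zero => rw [mem_canonTop_zero.1 h]; simp [F.zero_mem]
  | succ k => exact (mem_canonTop_succ.1 h).2.1

/-- The grain count at `u` before step `k`, when no vertex has toppled twice. -/
def GrainBalance (F : Ferrers n) (c : Fin (n + 1) → ℕ) (k : ℕ) : Prop :=
  ∀ u, u ≠ 0 → F.canonConfig c k u + (if u ∈ F.toppledBefore c k then F.deg u else 0) =
    c u + {w ∈ F.toppledBefore c k | F.Adj w u}.ncard

lemma GrainBalance.succ {c : Fin (n + 1) → ℕ} {k : ℕ} (h : F.GrainBalance c k)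
    (hd : Disjoint (F.toppledBefore c k) (F.canonTop c k)) : F.GrainBalance c (k + 1) := by
  intro u hu
  have hcard : {w ∈ F.toppledBefore c (k + 1) | F.Adj w u}.ncard =
      {w ∈ F.toppledBefore c k | F.Adj w u}.ncard + {w ∈ F.canonTop c k | F.Adj w u}.ncard := by
    rw [← Set.ncard_union_eq (hd.mono (Set.sep_subset _ _) (Set.sep_subset _ _)),
      toppledBefore_succ]
    congr 1
    ext w
    simp only [Set.mem_union, Set.mem_ofPred_eq]
    tauto
  have hu' := h u hu
  have hmem : u ∈ F.toppledBefore c (k + 1) ↔ u ∈ F.toppledBefore c k ∨ u ∈ F.canonTop c k := by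
    rw [toppledBefore_succ]; rfl
  rw [hcard, canonConfig_succ, toppleSet, if_neg hu]
  by_cases hB : u ∈ F.canonTop c k
  · have hP : u ∉ F.toppledBefore c k := fun hP => Set.disjoint_left.1 hd hP hB
    have hdeg : F.deg u ≤ F.canonConfig c k u := by
      cases k with
      | zero => exact absurd (mem_canonTop_zero.1 hB) hu
      | succ k => exact (mem_canonTop_succ.1 hB).2.2
    simp only [hP, hB, hmem, if_true, if_false, or_true] at hu' ⊢
    omega
  · simp only [hB, hmem, if_false, or_false] at hu' ⊢
    omega

/-- A non-sink vertex is unstable before step `k` exactly when it has not yet toppled and all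
its predecessors have. -/
lemma IsEW.deg_le_canonConfig_iff (hT : F.IsEW T) {k : ℕ}
    (hbal : F.GrainBalance (F.phiTC T) k)
    (hclosed : ∀ v ∈ F.toppledBefore (F.phiTC T) k, ∀ u, F.Arc T u v →
      u ∈ F.toppledBefore (F.phiTC T) k) {v : Fin (n + 1)} (hv : v ≠ 0) :
    F.deg v ≤ F.canonConfig (F.phiTC T) k v ↔
      v ∉ F.toppledBefore (F.phiTC T) k ∧
        ∀ u, F.Arc T u v → u ∈ F.toppledBefore (F.phiTC T) k := by
  have hb := hbal v hv
  rw [phiTC_eq_outdegree hv] at hb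
  have hdeg := deg_eq_arc (F := F) (T := T) v
  obtain ⟨u₀, hu₀⟩ := hT.exists_arc hv
  have hpos : 0 < {u | F.Arc T u v}.ncard := (Set.ncard_pos (Set.toFinite _)).2 ⟨u₀, hu₀⟩
  by_cases hP : v ∈ F.toppledBefore (F.phiTC T) k
  · have hle : {w ∈ F.toppledBefore (F.phiTC T) k | F.Adj w v}.ncard ≤ F.deg v :=
      Set.ncard_le_ncard (fun w hw => Or.symm hw.2) (Set.toFinite _)
    simp only [hP, if_true, not_true, false_and, iff_false] at hb ⊢
    omega
  · have hsub : {w ∈ F.toppledBefore (F.phiTC T) k | F.Adj w v} ⊆ {u | F.Arc T u v} := by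
      rintro w ⟨hw, hadj⟩
      rcases (adj_iff_arc (T := T)).1 hadj with h | h
      exacts [h, absurd (hclosed w hw v h) hP]
    have hle := Set.ncard_le_ncard hsub (Set.toFinite _)
    simp only [hP, if_false, add_zero, not_false_eq_true, true_and] at hb ⊢
    constructor
    · intro h u hu
      have heq := Set.eq_of_subset_of_ncard_le hsub (by omega) (Set.toFinite _)
      exact (heq.symm.subset hu).1
    · intro h
      have heq : {w ∈ F.toppledBefore (F.phiTC T) k | F.Adj w v} = {u | F.Arc T u v} :=
        hsub.antisymm fun u hu => ⟨h u hu, adj_iff_arc.2 (.inl hu)⟩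
      rw [heq] at hb
      omega

lemma IsEW.balance_and_closed (hT : F.IsEW T) (k : ℕ) :
    F.GrainBalance (F.phiTC T) k ∧
      ∀ v ∈ F.toppledBefore (F.phiTC T) k, ∀ u, F.Arc T u v →
        u ∈ F.toppledBefore (F.phiTC T) k := by
  induction k with
  | zero =>
    simp only [GrainBalance, toppledBefore_zero]
    exact ⟨fun u _ => by simp; rfl, by simp⟩
  | succ k ih =>
    have hblock : ∀ v ∈ F.canonTop (F.phiTC T) k, v ∉ F.toppledBefore (F.phiTC T) k ∧
        ∀ u, F.Arc T u v → u ∈ F.toppledBefore (F.phiTC T) k := by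
      intro v hv
      cases k with
      | zero =>
        rw [mem_canonTop_zero.1 hv, toppledBefore_zero]
        exact ⟨id, fun u hu => (hT.not_arc_zero u hu).elim⟩
      | succ k =>
        obtain ⟨hv₀, -, hdeg⟩ := mem_canonTop_succ.1 hv
        exact (hT.deg_le_canonConfig_iff ih.1 ih.2 hv₀).1 hdeg
    refine ⟨ih.1.succ (Set.disjoint_right.2 fun v hv => (hblock v hv).1), fun v hv u hu => ?_⟩
    rw [toppledBefore_succ] at hv ⊢
    rcases hv with hv | hv
    exacts [.inl (ih.2 v hv u hu), .inl ((hblock v hv).2 u hu)]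

/-- A vertex topples as soon as the parity allows once all its predecessors have toppled. -/
lemma IsEW.mem_toppledBefore_succ (hT : F.IsEW T) {k : ℕ} (hk : k ≠ 0) {v : Fin (n + 1)}
    (hpar : v ∈ F.rows ↔ Even k)
    (h : ∀ u, F.Arc T u v → u ∈ F.toppledBefore (F.phiTC T) k) :
    v ∈ F.toppledBefore (F.phiTC T) (k + 1) := by
  rcases eq_or_ne v 0 with rfl | hv
  · exact ⟨0, k.succ_pos, rfl⟩
  rw [toppledBefore_succ]
  by_cases hP : v ∈ F.toppledBefore (F.phiTC T) k
  · exact .inl hP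
  · obtain ⟨hbal, hclosed⟩ := hT.balance_and_closed k
    have hdeg := (hT.deg_le_canonConfig_iff hbal hclosed hv).2 ⟨hP, h⟩
    obtain ⟨m, rfl⟩ := Nat.exists_eq_succ_of_ne_zero hk
    exact .inr (mem_canonTop_succ.2 ⟨hv, hpar, hdeg⟩)

lemma IsEW.exists_arc_of_never_toppled (hT : F.IsEW T) {v : Fin (n + 1)}
    (hv : ∀ m, v ∉ F.canonTop (F.phiTC T) m) :
    ∃ u, F.Arc T u v ∧ ∀ m, u ∉ F.canonTop (F.phiTC T) m := by
  by_contra! hcon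
  choose! t ht using hcon
  set M := Finset.univ.sup t
  have hM : ∀ k, M < k → ∀ u, F.Arc T u v → u ∈ F.toppledBefore (F.phiTC T) k :=
    fun k hk u hu => ⟨t u, (Finset.le_sup (Finset.mem_univ u)).trans_lt hk, ht u hu⟩
  have key : ∃ k, M < k ∧ (v ∈ F.rows ↔ Even k) := by
    by_cases hr : v ∈ F.rows
    · exact ⟨2 * M + 2, by omega, by simp [hr, parity_simps]⟩
    · exact ⟨2 * M + 1, by omega, by simp [hr, parity_simps]⟩
  obtain ⟨k, hk, hpar⟩ := key
  obtain ⟨m, -, hm⟩ := hT.mem_toppledBefore_succ (by omega) hpar (hM k hk)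
  exact hv m hm

lemma IsEW.exists_mem_canonTop (hT : F.IsEW T) (v : Fin (n + 1)) :
    ∃ m, v ∈ F.canonTop (F.phiTC T) m := by
  by_contra! hv
  let Q := Finset.univ.filter fun u => ∀ m, u ∉ F.canonTop (F.phiTC T) m
  have hQ : ∀ u ∈ Q, ∃ w ∈ Q, F.Arc T w u := fun u hu => by
    obtain ⟨w, hw, hw'⟩ := hT.exists_arc_of_never_toppled (Finset.mem_filter.1 hu).2
    exact ⟨w, Finset.mem_filter.2 ⟨Finset.mem_univ _, hw'⟩, hw⟩
  have hR : ∀ i ∈ Q.filter (· ∈ F.rows), ∃ j ∈ Q.filter (· ∉ F.rows),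
      F.Cell i j ∧ T i j = false := fun i hi => by
    obtain ⟨hi, hr⟩ := Finset.mem_filter.1 hi
    obtain ⟨w, hw, h | h⟩ := hQ i hi
    exacts [absurd hr h.1.2.1, ⟨w, Finset.mem_filter.2 ⟨hw, h.1.2.1⟩, h⟩]
  have hC : ∀ j ∈ Q.filter (· ∉ F.rows), ∃ i ∈ Q.filter (· ∈ F.rows),
      F.Cell i j ∧ T i j = true := fun j hj => by
    obtain ⟨hj, hr⟩ := Finset.mem_filter.1 hj
    obtain ⟨w, hw, h | h⟩ := hQ j hj
    exacts [⟨w, Finset.mem_filter.2 ⟨hw, h.1.1⟩, h⟩, absurd h.1.1 hr]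
  have hempty := hT.cols_eq_empty _ _ hR hC
  have hvQ : v ∈ Q := Finset.mem_filter.2 ⟨Finset.mem_univ _, hv⟩
  by_cases hr : v ∈ F.rows
  · obtain ⟨j, hj, -⟩ := hR v (Finset.mem_filter.2 ⟨hvQ, hr⟩)
    exact absurd hj (by rw [hempty]; exact Finset.notMem_empty j)
  · exact absurd (Finset.mem_filter.2 ⟨hvQ, hr⟩) (by rw [hempty]; exact Finset.notMem_empty v)

lemma IsEW.mem_canonTop_bIdx (hT : F.IsEW T) (v : Fin (n + 1)) :
    v ∈ F.canonTop (F.phiTC T) (F.bIdx (F.phiTC T) v) :=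
  Nat.sInf_mem (hT.exists_mem_canonTop v)

lemma bIdx_lt_of_mem_toppledBefore {c : Fin (n + 1) → ℕ} {k : ℕ} {v : Fin (n + 1)}
    (h : v ∈ F.toppledBefore c k) : F.bIdx c v < k := by
  obtain ⟨m, hm, hv⟩ := h
  exact (Nat.sInf_le hv).trans_lt hm

lemma bIdx_zero (c : Fin (n + 1) → ℕ) : F.bIdx c 0 = 0 :=
  Nat.le_zero.1 (Nat.sInf_le (mem_canonTop_zero (F := F) (c := c).2 rfl))

lemma IsEW.bIdx_lt_of_arc (hT : F.IsEW T) {u v : Fin (n + 1)} (h : F.Arc T u v) :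
    F.bIdx (F.phiTC T) u < F.bIdx (F.phiTC T) v := by
  have hmem := hT.mem_canonTop_bIdx v
  have hv : v ≠ 0 := by rintro rfl; exact hT.not_arc_zero u h
  generalize F.bIdx (F.phiTC T) v = k at hmem ⊢
  cases k with
  | zero => exact absurd (mem_canonTop_zero.1 hmem) hv
  | succ k =>
    obtain ⟨hbal, hclosed⟩ := hT.balance_and_closed (k + 1)
    have hdeg := (mem_canonTop_succ.1 hmem).2.2
    exact bIdx_lt_of_mem_toppledBefore
      (((hT.deg_le_canonConfig_iff hbal hclosed hv).1 hdeg).2 u h)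

lemma IsEW.even_bIdx_iff (hT : F.IsEW T) (v : Fin (n + 1)) :
    Even (F.bIdx (F.phiTC T) v) ↔ v ∈ F.rows :=
  (mem_rows_iff_even (hT.mem_canonTop_bIdx v)).symm

/-- Every non-sink vertex has a predecessor in the immediately preceding block. -/
lemma IsEW.exists_arc_bIdx_succ (hT : F.IsEW T) {v : Fin (n + 1)} (hv : v ≠ 0) :
    ∃ u, F.Arc T u v ∧ F.bIdx (F.phiTC T) u + 1 = F.bIdx (F.phiTC T) v := by
  by_contra! hcon
  have hgap : ∀ u, F.Arc T u v → F.bIdx (F.phiTC T) u + 3 ≤ F.bIdx (F.phiTC T) v := by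
    intro u hu
    have h₁ := hT.bIdx_lt_of_arc hu
    have h₂ := hcon u hu
    have h₃ := hu.mem_rows_iff
    rw [← hT.even_bIdx_iff, ← hT.even_bIdx_iff, Nat.even_iff, Nat.even_iff] at h₃
    omega
  obtain ⟨u₀, hu₀⟩ := hT.exists_arc hv
  have h₀ := hgap u₀ hu₀
  have hpar := hT.even_bIdx_iff v
  have hmem : v ∈ F.toppledBefore (F.phiTC T) (F.bIdx (F.phiTC T) v - 2 + 1) := by
    refine hT.mem_toppledBefore_succ (by omega) ?_ fun u hu =>
      ⟨_, ?_, hT.mem_canonTop_bIdx u⟩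
    · rw [← hpar, Nat.even_sub (by omega)]
      simp
    · have := hgap u hu
      omega
  have := bIdx_lt_of_mem_toppledBefore hmem
  omega

lemma Arc.cell_of_mem_rows {u v : Fin (n + 1)} (h : F.Arc T u v) (hv : v ∈ F.rows) :
    F.Cell v u ∧ T v u = false :=
  h.resolve_left fun h' => h'.1.2.1 hv

lemma Arc.cell_of_notMem_rows {u v : Fin (n + 1)} (h : F.Arc T u v) (hv : v ∉ F.rows) :
    F.Cell u v ∧ T u v = true :=
  h.resolve_right fun h' => hv h'.1.1

lemma IsEW.bIdx_ne (hT : F.IsEW T) {i j : Fin (n + 1)} (hi : i ∈ F.rows) (hj : j ∉ F.rows) :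
    F.bIdx (F.phiTC T) i ≠ F.bIdx (F.phiTC T) j := fun h =>
  hj ((hT.even_bIdx_iff j).1 (h ▸ (hT.even_bIdx_iff i).2 hi))

lemma suppS_eq_true {i j : Fin (n + 1)} :
    F.suppS T i j = true ↔ F.bIdx (F.phiTC T) i < F.bIdx (F.phiTC T) j := by
  simp [suppS]

lemma suppS_eq_false {i j : Fin (n + 1)} :
    F.suppS T i j = false ↔ F.bIdx (F.phiTC T) j ≤ F.bIdx (F.phiTC T) i := by
  simp [suppS]

end Ferrers

/-- **Lemma.** If the entry of a cell `(j, k)` of `T` is a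
cornersupport, then some `S_{j'k'}` induces it, and moreover either
`T_{jk} = T_{jk'} = 0` and `T_{j'k'} = 1` with `(j, k')`, `(j', k')` cells of `F`,
or `T_{jk} = T_{j'k} = 1` and `T_{j'k'} = 0` with `(j', k)`, `(j', k')` cells of `F`. -/
theorem cornersupport_three_cells {n : ℕ} (F : Ferrers n)
    (T : Fin (n + 1) → Fin (n + 1) → Bool) (hT : F.IsEW T)
    (j k : Fin (n + 1)) (hcell : F.Cell j k) (hcs : F.Cornersupport T j k) :
    ∃ j' k' : Fin (n + 1), j' ∈ F.rows ∧ k' ∉ F.rows ∧ j' ≠ j ∧ k' ≠ k ∧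
      F.suppS T j' k' = !(T j k) ∧ F.suppS T j' k = T j k ∧ F.suppS T j k' = T j k ∧
      ((T j k = false ∧ T j k' = false ∧ T j' k' = true ∧ F.Cell j k' ∧ F.Cell j' k') ∨
       (T j k = true ∧ T j' k = true ∧ T j' k' = false ∧ F.Cell j' k ∧ F.Cell j' k')) := by
  obtain ⟨j', k', hj', hk', -, -, h₁, h₂, h₃⟩ := hcs
  have hne := hT.bIdx_ne hj' hk'
  have hne₂ := hT.bIdx_ne hj' hcell.2.1
  have hne₃ := hT.bIdx_ne hcell.1 hk'
  cases hx : T j k with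
  | false =>
    simp only [hx, Bool.not_false, Ferrers.suppS_eq_true, Ferrers.suppS_eq_false] at h₁ h₂ h₃ ⊢
    have hj₀ : j ≠ 0 := by
      rintro rfl
      rw [Ferrers.bIdx_zero] at h₃
      omega
    obtain ⟨l, hl, hbl⟩ := hT.exists_arc_bIdx_succ hj₀
    obtain ⟨hlc, hlT⟩ := hl.cell_of_mem_rows hcell.1
    have hl₀ : l ≠ 0 := fun h => hlc.2.1 (h ▸ F.zero_mem)
    obtain ⟨i, hi, hbi⟩ := hT.exists_arc_bIdx_succ hl₀
    obtain ⟨hic, hiT⟩ := hi.cell_of_notMem_rows hlc.2.1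
    refine ⟨i, l, hic.1, hlc.2.1, ?_, ?_, by omega, by omega, by omega,
      .inl ⟨trivial, hlT, hiT, hlc, hic⟩⟩ <;> rintro rfl <;> omega
  | true =>
    simp only [hx, Bool.not_true, Ferrers.suppS_eq_true, Ferrers.suppS_eq_false] at h₁ h₂ h₃ ⊢
    have hk₀ : k ≠ 0 := fun h => hcell.2.1 (h ▸ F.zero_mem)
    obtain ⟨i, hi, hbi⟩ := hT.exists_arc_bIdx_succ hk₀
    obtain ⟨hic, hiT⟩ := hi.cell_of_notMem_rows hcell.2.1
    have hi₀ : i ≠ 0 := by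
      rintro rfl
      rw [Ferrers.bIdx_zero] at hbi
      omega
    obtain ⟨l, hl, hbl⟩ := hT.exists_arc_bIdx_succ hi₀
    obtain ⟨hlc, hlT⟩ := hl.cell_of_mem_rows hic.1
    refine ⟨i, l, hic.1, hlc.2.1, ?_, ?_, by omega, by omega, by omega,
      .inr ⟨trivial, hiT, hlT, hic, hlc⟩⟩ <;> rintro rfl <;> omega
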